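/- For every s ∈ ℂ with -1 < Re s < 0 and every real a ≠ 0, ∫_0^∞ e^{iax} x^{-s-1} dx = (-i a)^s Γ(-s), where (-ia)^s is taken with the principal branch of the logarithm and the integral is an improper Riemann integral. -/

import Mathlib

open Complex Filter

lemma tail_bound_aux (z r : ℂ) (hz1 : z.re < 1) (hr : 0 ≤ r.re) (hr0 : r ≠ 0)
    (T U : ℝ) (hT : 0 < T) (hTU : T ≤ U) :
    ‖∫ x in T..U, (x : ℂ) ^ (z - 1) * Complex.exp (-(r * x))‖ ≤
      (1 / ‖r‖) * (2 + ‖z - 1‖ / (1 - z.re)) * T ^ (z.re - 1) := by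
  have hU : 0 < U := hT.trans_le hTU
  have hpos : ∀ x ∈ Set.uIcc T U, 0 < x := by
    intro x hx
    rw [Set.uIcc_of_le hTU] at hx
    exact hT.trans_le hx.1
  have hz : z - 1 ≠ 0 := by
    intro h
    have := congrArg Complex.re h
    simp at this
    linarith
  have hrn : 0 < ‖r‖ := norm_pos_iff.mpr hr0
  have hu : ∀ x ∈ Set.uIcc T U,
      HasDerivAt (fun x : ℝ => (x : ℂ) ^ (z - 1)) ((z - 1) * (x : ℂ) ^ (z - 1 - 1)) x := by
    intro x hx
    have h := hasDerivAt_ofReal_cpow_const' (x := x) (hpos x hx).ne' (r := z - 1 - 1)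
      (by intro h
          have := congrArg Complex.re h
          simp at this
          linarith)
    have h2 := h.const_mul (z - 1)
    simp only [sub_add_cancel] at h2
    refine h2.congr_of_eventuallyEq (Eventually.of_forall fun y => ?_)
    simp only
    field_simp
  have hv : ∀ x ∈ Set.uIcc T U,
      HasDerivAt (fun x : ℝ => -(1 / r) * Complex.exp (-(r * x))) (Complex.exp (-(r * x))) x := by
    intro x hx
    have h : HasDerivAt (fun x : ℝ => -(r * (x : ℂ))) (-(r * 1)) x :=
      ((Complex.ofRealCLM.hasDerivAt (x := x)).const_mul r).neg
    have h3 := (h.cexp).const_mul (-(1 / r))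
    have e : Complex.exp (-(r * x)) =
        -(1 / r) * (Complex.exp (-(r * (x : ℂ))) * (-(r * 1))) := by
      field_simp
    rw [e]
    exact h3
  have hc : ∀ w : ℂ, ContinuousOn (fun x : ℝ => (x : ℂ) ^ w) (Set.uIcc T U) := by
    intro w x hx
    exact (Complex.continuousAt_ofReal_cpow_const x w
      (Or.inr (hpos x hx).ne')).continuousWithinAt
  have hibp := intervalIntegral.integral_mul_deriv_eq_deriv_mul hu hv
    ((continuousOn_const.mul (hc _)).intervalIntegrable)
    ((by fun_prop : Continuous fun x : ℝ => Complex.exp (-(r * x))).intervalIntegrable _ _)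
  rw [hibp]
  have hexp : ∀ x : ℝ, 0 < x → ‖Complex.exp (-(r * x))‖ ≤ 1 := by
    intro x hx
    rw [Complex.norm_exp, Real.exp_le_one_iff]
    simp
    positivity
  have hb : ∀ x : ℝ, 0 < x → ‖(x : ℂ) ^ (z - 1) * (-(1 / r) * Complex.exp (-(r * x)))‖ ≤
      1 / ‖r‖ * x ^ (z.re - 1) := by
    intro x hx
    rw [norm_mul, norm_mul, Complex.norm_cpow_eq_rpow_re_of_pos hx, norm_neg, norm_div, norm_one]
    have := hexp x hx
    simp only [Complex.sub_re, Complex.one_re]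
    calc x ^ (z.re - 1) * (1 / ‖r‖ * ‖Complex.exp (-(r * x))‖)
        ≤ x ^ (z.re - 1) * (1 / ‖r‖ * 1) := by gcongr
      _ = _ := by ring
  have hUT : U ^ (z.re - 1) ≤ T ^ (z.re - 1) :=
    Real.rpow_le_rpow_of_nonpos hT hTU (by linarith)
  have hI : ‖∫ x in T..U, (z - 1) * (x : ℂ) ^ (z - 1 - 1) * (-(1 / r) * Complex.exp (-(r * x)))‖ ≤
      1 / ‖r‖ * (‖z - 1‖ / (1 - z.re)) * T ^ (z.re - 1) := by
    have hri : IntervalIntegrable (fun x : ℝ => x ^ (z.re - 2)) MeasureTheory.volume T U :=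
      ContinuousOn.intervalIntegrable fun x hx =>
        (Real.continuousAt_rpow_const x _ (Or.inl (hpos x hx).ne')).continuousWithinAt
    have h := intervalIntegral.norm_integral_le_of_norm_le (μ := MeasureTheory.volume) hTU
      (f := fun x : ℝ => (z - 1) * (x : ℂ) ^ (z - 1 - 1) * (-(1 / r) * Complex.exp (-(r * x))))
      (g := fun x : ℝ => (‖z - 1‖ / ‖r‖) * x ^ (z.re - 2))
      (Eventually.of_forall fun x hx => by
        have hx0 : 0 < x := hT.trans hx.1
        rw [norm_mul, norm_mul, norm_mul, Complex.norm_cpow_eq_rpow_re_of_pos hx0, norm_neg,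
          norm_div, norm_one]
        have := hexp x hx0
        have e : (z - 1 - 1).re = z.re - 2 := by simp; ring
        rw [e]
        calc ‖z - 1‖ * x ^ (z.re - 2) * (1 / ‖r‖ * ‖Complex.exp (-(r * x))‖)
            ≤ ‖z - 1‖ * x ^ (z.re - 2) * (1 / ‖r‖ * 1) := by gcongr
          _ = _ := by ring)
      (hri.const_mul _)
    refine h.trans ?_
    rw [intervalIntegral.integral_const_mul, integral_rpow]
    · have e : z.re - 2 + 1 = z.re - 1 := by ring
      rw [e]
      have h1 : (0 : ℝ) < 1 - z.re := by linarith
      have h2 : (U ^ (z.re - 1) - T ^ (z.re - 1)) / (z.re - 1) ≤ T ^ (z.re - 1) / (1 - z.re) := by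
        rw [← neg_sub 1 z.re, div_neg, ← neg_div]
        have : 0 ≤ U ^ (-(1 - z.re)) := Real.rpow_nonneg hU.le _
        gcongr
        linarith
      calc ‖z - 1‖ / ‖r‖ * ((U ^ (z.re - 1) - T ^ (z.re - 1)) / (z.re - 1))
          ≤ ‖z - 1‖ / ‖r‖ * (T ^ (z.re - 1) / (1 - z.re)) := by gcongr
        _ = _ := by ring
    · right
      refine ⟨by intro h; linarith, fun h => lt_irrefl _ (hpos 0 h)⟩
  have hbU := hb U hU
  have hbT := hb T hT
  have hrU : 1 / ‖r‖ * U ^ (z.re - 1) ≤ 1 / ‖r‖ * T ^ (z.re - 1) := by gcongr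
  refine (norm_sub_le _ _).trans ?_
  have := norm_sub_le ((U : ℂ) ^ (z - 1) * (-(1 / r) * Complex.exp (-(r * U))))
    ((T : ℂ) ^ (z - 1) * (-(1 / r) * Complex.exp (-(r * T))))
  nlinarith

lemma integrable_aux (z r : ℂ) (hz0 : 0 < z.re) (a b : ℝ) :
    IntervalIntegrable (fun x : ℝ => (x : ℂ) ^ (z - 1) * Complex.exp (-(r * x)))
      MeasureTheory.volume a b :=
  (intervalIntegral.intervalIntegrable_cpow' (by simpa using hz0)).mul_continuousOn
    (by fun_prop)

lemma integrableOn_aux (z r : ℂ) (hz0 : 0 < z.re) (hr : 0 < r.re) :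
    MeasureTheory.IntegrableOn
      (fun x : ℝ => (x : ℂ) ^ (z - 1) * Complex.exp (-(r * x))) (Set.Ioi 0) := by
  have h := integrableOn_rpow_mul_exp_neg_mul_rpow (s := z.re - 1) (p := 1) (b := r.re)
    (by linarith) one_pos hr
  refine MeasureTheory.Integrable.mono' h ?_ ?_
  · refine ContinuousOn.aestronglyMeasurable ?_ measurableSet_Ioi
    refine ContinuousOn.mul (fun x hx => ?_) (by fun_prop)
    exact (Complex.continuousAt_ofReal_cpow_const x _
      (Or.inr (ne_of_gt hx))).continuousWithinAt
  · refine (MeasureTheory.ae_restrict_iff' measurableSet_Ioi).mpr (Eventually.of_forall fun x hx => ?_)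
    rw [norm_mul, Complex.norm_cpow_eq_rpow_re_of_pos hx, Complex.norm_exp]
    simp

lemma integral_cpow_aux (z r : ℂ) (hz0 : 0 < z.re) (hr : 0 < r.re) :
    ∫ x in Set.Ioi (0 : ℝ), (x : ℂ) ^ (z - 1) * Complex.exp (-(r * x)) =
      (1 / r) ^ z * Complex.Gamma z := by
  have hopen : IsOpen {w : ℂ | 0 < w.re} := isOpen_lt continuous_const Complex.continuous_re
  have hA : AnalyticOnNhd ℂ (fun r : ℂ => ∫ x in Set.Ioi (0 : ℝ),
      (x : ℂ) ^ (z - 1) * Complex.exp (-(r * x))) {w : ℂ | 0 < w.re} := by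
    refine DifferentiableOn.analyticOnNhd (fun w hw => ?_) hopen
    have hw' : 0 < w.re := hw
    have hs : {v : ℂ | w.re / 2 < v.re} ∈ nhds w :=
      (isOpen_lt continuous_const Complex.continuous_re).mem_nhds
        (by simp only [Set.mem_ofPred_eq]; linarith)
    have h := hasDerivAt_integral_of_dominated_loc_of_deriv_le (𝕜 := ℂ)
      (μ := MeasureTheory.volume.restrict (Set.Ioi (0 : ℝ)))
      (F := fun (r : ℂ) (x : ℝ) => (x : ℂ) ^ (z - 1) * Complex.exp (-(r * x)))
      (F' := fun (r : ℂ) (x : ℝ) => (x : ℂ) ^ (z - 1) * (Complex.exp (-(r * x)) * (-(1 * x))))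
      (x₀ := w) (s := {v : ℂ | w.re / 2 < v.re})
      (bound := fun x : ℝ => x ^ z.re * Real.exp (-(w.re / 2) * x ^ (1 : ℝ)))
      hs ?_ (integrableOn_aux z w hz0 hw) ?_ ?_ ?_ ?_
    · exact h.2.differentiableAt.differentiableWithinAt
    · filter_upwards [hopen.mem_nhds hw] with v hv
      exact (integrableOn_aux z v hz0 hv).aestronglyMeasurable
    · have := (integrableOn_aux z w hz0 hw).aestronglyMeasurable.mul
        ((by fun_prop : Continuous fun x : ℝ => -(1 * (x : ℂ))).aestronglyMeasurable
          (μ := MeasureTheory.volume.restrict (Set.Ioi (0 : ℝ))))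
      refine this.congr (Eventually.of_forall fun x => ?_)
      simp only [Pi.mul_apply]
      ring
    · refine (MeasureTheory.ae_restrict_iff' measurableSet_Ioi).mpr
        (Eventually.of_forall fun x hx v hv => ?_)
      have hx0 : 0 < x := hx
      have hv' : w.re / 2 < v.re := hv
      rw [norm_mul, norm_mul, Complex.norm_cpow_eq_rpow_re_of_pos hx0, Complex.norm_exp, norm_neg,
        one_mul, Complex.norm_of_nonneg hx0.le, Real.rpow_one]
      have e : x ^ z.re = x ^ (z - 1).re * x := by
        rw [← Real.rpow_add_one hx0.ne']
        simp
      rw [e, mul_comm (Real.exp _) x, ← mul_assoc]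
      have : (-(v * (x : ℂ))).re ≤ -(w.re / 2) * x := by
        simp
        nlinarith
      gcongr
    · exact integrableOn_rpow_mul_exp_neg_mul_rpow (by linarith) one_pos (by linarith)
    · refine Eventually.of_forall fun x v _ => ?_
      exact ((((hasDerivAt_id v).mul_const (x : ℂ)).neg).cexp).const_mul _
  have hB : AnalyticOnNhd ℂ (fun r : ℂ => (1 / r) ^ z * Complex.Gamma z) {w : ℂ | 0 < w.re} := by
    refine DifferentiableOn.analyticOnNhd (fun w hw => ?_) hopen
    have hw' : 0 < w.re := hw
    have hw0 : w ≠ 0 := by rintro rfl; simp at hw'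
    refine DifferentiableAt.differentiableWithinAt ?_
    refine DifferentiableAt.mul_const (DifferentiableAt.cpow_const
      ((differentiableAt_const _).div differentiableAt_id hw0) ?_) _
    rw [Complex.mem_slitPlane_iff]
    left
    change 0 < (1 / w).re
    rw [one_div, Complex.inv_re]
    exact div_pos hw' (Complex.normSq_pos.mpr hw0)
  refine AnalyticOnNhd.eqOn_of_preconnected_of_frequently_eq hA hB
    (convex_halfSpace_re_gt 0).isPreconnected (z₀ := 1) (by simp) ?_ hr
  have ht : Tendsto (fun x : ℝ => (x : ℂ)) (nhdsWithin 1 {1}ᶜ) (nhdsWithin 1 {1}ᶜ) := by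
    refine tendsto_nhdsWithin_iff.mpr ⟨?_, ?_⟩
    · have := Complex.continuous_ofReal.tendsto 1
      rw [Complex.ofReal_one] at this
      exact this.mono_left nhdsWithin_le_nhds
    · filter_upwards [self_mem_nhdsWithin] with x hx
      simpa using hx
  refine ht.frequently (Eventually.frequently ?_)
  filter_upwards [nhdsWithin_le_nhds (Ioi_mem_nhds (zero_lt_one' ℝ))] with x hx
  exact Complex.integral_cpow_mul_exp_neg_mul_Ioi hz0 hx

lemma full_bound_aux (z r : ℂ) (hz0 : 0 < z.re) (hz1 : z.re < 1) (hr : 0 < r.re)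
    (T : ℝ) (hT : 0 < T) :
    ‖(1 / r) ^ z * Complex.Gamma z -
      ∫ x in (0 : ℝ)..T, (x : ℂ) ^ (z - 1) * Complex.exp (-(r * x))‖ ≤
      (1 / ‖r‖) * (2 + ‖z - 1‖ / (1 - z.re)) * T ^ (z.re - 1) := by
  have hr0 : r ≠ 0 := by rintro rfl; simp at hr
  have hint := integrableOn_aux z r hz0 hr
  have hlim := MeasureTheory.intervalIntegral_tendsto_integral_Ioi 0 hint tendsto_id
  rw [integral_cpow_aux z r hz0 hr] at hlim
  refine le_of_tendsto (hlim.sub_const _).norm ?_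
  filter_upwards [eventually_ge_atTop T] with U hU
  simp only [id]
  rw [intervalIntegral.integral_interval_sub_left (integrable_aux z r hz0 _ _)
    (integrable_aux z r hz0 _ _)]
  exact tail_bound_aux z r hz1 hr.le hr0 T U hT hU

lemma limit_bound_aux (z : ℂ) (a : ℝ) (ha : a ≠ 0) (hz0 : 0 < z.re) (hz1 : z.re < 1)
    (T : ℝ) (hT : 0 < T) :
    ‖(1 / (-Complex.I * a)) ^ z * Complex.Gamma z -
      ∫ x in (0 : ℝ)..T, (x : ℂ) ^ (z - 1) * Complex.exp (-((-Complex.I * a) * x))‖ ≤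
      (1 / ‖-Complex.I * (a : ℂ)‖) * (2 + ‖z - 1‖ / (1 - z.re)) * T ^ (z.re - 1) := by
  have hne : -Complex.I * (a : ℂ) ≠ 0 := by simp [ha]
  have hr : Tendsto (fun ε : ℝ => (ε : ℂ) + -Complex.I * a) (nhdsWithin 0 (Set.Ioi 0))
      (nhds (-Complex.I * a)) := by
    have : Continuous (fun ε : ℝ => (ε : ℂ) + -Complex.I * a) := by fun_prop
    have h := this.tendsto 0
    simp only [Complex.ofReal_zero, zero_add] at h
    exact h.mono_left nhdsWithin_le_nhds
  have hslit : 1 / (-Complex.I * (a : ℂ)) ∈ Complex.slitPlane := by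
    rw [Complex.mem_slitPlane_iff]
    right
    simp [ha]
  have hL : Tendsto (fun ε : ℝ => (1 / ((ε : ℂ) + -Complex.I * a)) ^ z * Complex.Gamma z)
      (nhdsWithin 0 (Set.Ioi 0)) (nhds ((1 / (-Complex.I * a)) ^ z * Complex.Gamma z)) :=
    ((tendsto_const_nhds.div hr hne).cpow tendsto_const_nhds hslit).mul_const _
  have hF : Tendsto (fun ε : ℝ => ∫ x in (0 : ℝ)..T,
        (x : ℂ) ^ (z - 1) * Complex.exp (-(((ε : ℂ) + -Complex.I * a) * x)))
      (nhdsWithin 0 (Set.Ioi 0)) (nhds (∫ x in (0 : ℝ)..T,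
        (x : ℂ) ^ (z - 1) * Complex.exp (-((-Complex.I * a) * x)))) := by
    refine intervalIntegral.tendsto_integral_filter_of_dominated_convergence
      (fun x : ℝ => ‖(x : ℂ) ^ (z - 1)‖) ?_ ?_ ?_ ?_
    · exact Eventually.of_forall fun ε =>
        (integrable_aux z _ hz0 0 T).def'.aestronglyMeasurable
    · filter_upwards [self_mem_nhdsWithin] with ε hε
      refine Eventually.of_forall fun x hx => ?_
      rw [Set.uIoc_of_le hT.le] at hx
      rw [norm_mul, Complex.norm_exp]
      refine mul_le_of_le_one_right (norm_nonneg _) ?_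
      rw [Real.exp_le_one_iff]
      simp
      exact mul_nonneg (le_of_lt hε) hx.1.le
    · exact (intervalIntegral.intervalIntegrable_cpow' (by simpa using hz0)).norm
    · refine Eventually.of_forall fun x _ => ?_
      exact ((hr.mul_const _).neg.cexp).const_mul _
  have hR : Tendsto (fun ε : ℝ => (1 / ‖(ε : ℂ) + -Complex.I * a‖) *
      (2 + ‖z - 1‖ / (1 - z.re)) * T ^ (z.re - 1)) (nhdsWithin 0 (Set.Ioi 0))
      (nhds ((1 / ‖-Complex.I * (a : ℂ)‖) * (2 + ‖z - 1‖ / (1 - z.re)) * T ^ (z.re - 1))) :=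
    ((tendsto_const_nhds.div hr.norm (norm_ne_zero_iff.mpr hne)).mul_const _).mul_const _
  refine le_of_tendsto_of_tendsto (hL.sub hF).norm hR ?_
  filter_upwards [self_mem_nhdsWithin] with ε hε
  exact full_bound_aux z _ hz0 hz1 (by simpa using hε) T hT

/-- For `-1 < Re s < 0` and real `a ≠ 0`, the improper integral
`∫_0^∞ e^{iax} x^{-s-1} dx` equals `(-ia)^s Γ(-s)` (principal branch powers). -/
theorem integral_exp_mul_cpow (s : ℂ) (h1 : -1 < s.re) (h2 : s.re < 0)
    (a : ℝ) (ha : a ≠ 0) :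
    Tendsto (fun T : ℝ =>
        ∫ x in (0 : ℝ)..T, Complex.exp (Complex.I * a * x) * (x : ℂ) ^ (-s - 1))
      atTop (nhds ((-Complex.I * a) ^ s * Complex.Gamma (-s))) := by
  have hpow : (1 / (-Complex.I * (a : ℂ))) ^ (-s) = (-Complex.I * a) ^ s := by
    have harg : (-Complex.I * (a : ℂ)).arg ≠ Real.pi := by
      intro h
      rw [Complex.arg_eq_pi_iff] at h
      simp at h
    rw [one_div, Complex.inv_cpow _ _ harg, Complex.cpow_neg, inv_inv]
  rw [← hpow, tendsto_iff_norm_sub_tendsto_zero]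
  have hz1 : (-s).re < 1 := by simp; linarith
  have h0 : Tendsto (fun T : ℝ => (1 / ‖-Complex.I * (a : ℂ)‖) *
      (2 + ‖-s - 1‖ / (1 - (-s).re)) * T ^ ((-s).re - 1)) atTop (nhds 0) := by
    have h := tendsto_rpow_neg_atTop (y := 1 - (-s).re) (by linarith)
    rw [neg_sub] at h
    simpa using h.const_mul ((1 / ‖-Complex.I * (a : ℂ)‖) * (2 + ‖-s - 1‖ / (1 - (-s).re)))
  refine squeeze_zero' (Eventually.of_forall fun _ => norm_nonneg _) ?_ h0
  filter_upwards [eventually_gt_atTop 0] with T hT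
  have h := limit_bound_aux (-s) a ha (by simpa using h2) hz1 T hT
  rw [norm_sub_rev] at h
  have e : (fun x : ℝ => Complex.exp (Complex.I * a * x) * (x : ℂ) ^ (-s - 1)) =
      fun x : ℝ => (x : ℂ) ^ (-s - 1) * Complex.exp (-((-Complex.I * a) * x)) := by
    ext x
    rw [mul_comm]
    congr 2
    ring
  rw [e]
  exact h
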